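/- If λ is a real number and y : [0,1] → ℝ is a twice continuously differentiable function, not identically zero, satisfying -y''(x) = λ * (1+x)^(-2) * y(x) for all x in [0,1] together with y(0) = y(1) = 0, then there exists a positive integer n such that λ = 1/4 + (n*π/log 2)^2. -/

import Mathlib

open Real

/-!
The Liouville substitution `y(x) = e^{t/2} u(t)`, `t = log (c + x)`, turns `-y'' = λ (c + x)⁻² y`
into the equation `-u'' = μ u` with constant coefficient `μ = λ - 1/4`. Let `S` solve the latter
with `S(0) = 0`, `S'(0) = 1`. A solution with `u(a) = 0` is `u(t) = S(t - a) u'(a)`, so a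
nontrivial one with `u(b) = 0` forces `S(b - a) = 0`. Over `ℂ` no distinction of signs is needed:
`S(t) = sin (ω t) / ω` whenever `μ = ω² ≠ 0`, and all zeros of the complex sine are real. This also
shows that eigenvalues are real, without appealing to self-adjointness.
-/

section

open Set

variable {E : Type*} [NormedAddCommGroup E] [NormedSpace ℂ E]
variable {F : Type*} [NormedAddCommGroup F] [NormedSpace ℝ F]

/-- `u` solves the Sturm–Liouville equation `-u'' = q u` on `s` and `u'` is its derivative. An
eigenvalue parameter is part of `q`, and derivatives are relative to `s`, hence one-sided at
endpoints of an interval. -/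
structure IsSturmLiouvilleSolutionOn (q : ℝ → ℂ) (s : Set ℝ) (u u' : ℝ → E) : Prop where
  hasDerivWithinAt : ∀ t ∈ s, HasDerivWithinAt u (u' t) s t
  hasDerivWithinAt_deriv : ∀ t ∈ s, HasDerivWithinAt u' (-(q t • u t)) s t

/-- `u` is a nontrivial solution, with derivative `u'`, of the Dirichlet problem `-u'' = q u` on
`[a, b]`, `u(a) = u(b) = 0`. -/
structure IsDirichletEigenfunction (q : ℝ → ℂ) (a b : ℝ) (u u' : ℝ → E) : Prop
    extends IsSturmLiouvilleSolutionOn q (Icc a b) u u' where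
  left_eq_zero : u a = 0
  right_eq_zero : u b = 0
  exists_ne_zero : ∃ t ∈ Icc a b, u t ≠ 0

theorem IsDirichletEigenfunction.left_lt_right {q : ℝ → ℂ} {a b : ℝ} {u u' : ℝ → E}
    (hu : IsDirichletEigenfunction q a b u u') : a < b := by
  obtain ⟨t, ht, hut⟩ := hu.exists_ne_zero
  have hat : a ≠ t := fun hat => hut (hat ▸ hu.left_eq_zero)
  exact (lt_of_le_of_ne ht.1 hat).trans_le ht.2

theorem isSturmLiouvilleSolutionOn_ofReal {q y : ℝ → ℝ} {s : Set ℝ} (hs : UniqueDiffOn ℝ s)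
    (hy : ContDiffOn ℝ 2 y s)
    (hode : ∀ x ∈ s, -(iteratedDerivWithin 2 y s x) = q x * y x) :
    IsSturmLiouvilleSolutionOn (fun x => (q x : ℂ)) s (fun x => (y x : ℂ))
      (fun x => ((derivWithin y s x : ℝ) : ℂ)) where
  hasDerivWithinAt x hx :=
    (hy.differentiableOn two_ne_zero x hx).hasDerivWithinAt.ofReal_comp
  hasDerivWithinAt_deriv x hx := by
    have hy' : ContDiffOn ℝ 1 (derivWithin y s) s := hy.derivWithin hs (by norm_num)
    have hsecond : derivWithin (derivWithin y s) s x = -(q x * y x) := by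
      rw [← hode x hx, neg_neg, iteratedDerivWithin_succ, iteratedDerivWithin_one]
    refine (hy'.differentiableOn one_ne_zero x hx).hasDerivWithinAt.ofReal_comp.congr_deriv ?_
    rw [hsecond, smul_eq_mul]
    push_cast
    rfl

theorem isDirichletEigenfunction_ofReal {q y : ℝ → ℝ} {a b : ℝ} (hab : a < b)
    (hy : ContDiffOn ℝ 2 y (Icc a b))
    (hode : ∀ x ∈ Icc a b, -(iteratedDerivWithin 2 y (Icc a b) x) = q x * y x)
    (ha : y a = 0) (hb : y b = 0) (hnz : ∃ x ∈ Icc a b, y x ≠ 0) :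
    IsDirichletEigenfunction (fun x => (q x : ℂ)) a b (fun x => (y x : ℂ))
      (fun x => ((derivWithin y (Icc a b) x : ℝ) : ℂ)) where
  toIsSturmLiouvilleSolutionOn :=
    isSturmLiouvilleSolutionOn_ofReal (uniqueDiffOn_Icc hab) hy hode
  left_eq_zero := Complex.ofReal_eq_zero.2 ha
  right_eq_zero := Complex.ofReal_eq_zero.2 hb
  exists_ne_zero := hnz.imp fun _ => And.imp_right Complex.ofReal_ne_zero.2

theorem isSturmLiouvilleSolutionOn_id :
    IsSturmLiouvilleSolutionOn (fun _ => 0) univ (fun t : ℝ => (t : ℂ)) (fun _ => 1) where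
  hasDerivWithinAt t _ := (hasDerivAt_id t).ofReal_comp.hasDerivWithinAt
  hasDerivWithinAt_deriv t _ := by simpa using hasDerivWithinAt_const t univ (1 : ℂ)

theorem isSturmLiouvilleSolutionOn_sin_div {ω : ℂ} (hω : ω ≠ 0) :
    IsSturmLiouvilleSolutionOn (fun _ => ω ^ 2) univ (fun t : ℝ => Complex.sin (ω * t) / ω)
      (fun t : ℝ => Complex.cos (ω * t)) := by
  have hmul (t : ℝ) : HasDerivAt (fun z : ℂ => ω * z) ω t := by
    simpa using (hasDerivAt_id (t : ℂ)).const_mul ω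
  constructor <;> intro t _
  · refine ((hmul t).csin.div_const ω).comp_ofReal.hasDerivWithinAt.congr_deriv ?_
    field_simp
  · refine (hmul t).ccos.comp_ofReal.hasDerivWithinAt.congr_deriv ?_
    rw [smul_eq_mul]
    field_simp

theorem IsSturmLiouvilleSolutionOn.eq_smul_add_smul {μ : ℂ} {s : Set ℝ} {u u' : ℝ → E}
    {S S' : ℝ → ℂ} (hu : IsSturmLiouvilleSolutionOn (fun _ => μ) s u u') (hs : Convex ℝ s)
    (hS : IsSturmLiouvilleSolutionOn (fun _ => μ) univ S S') (hS₀ : S 0 = 0) (hS'₀ : S' 0 = 1)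
    {a t : ℝ} (ha : a ∈ s) (ht : t ∈ s) :
    u t = S' (t - a) • u a + S (t - a) • u' a := by
  have hderiv : ∀ x ∈ s,
      HasDerivWithinAt (fun x => S' (t - x) • u x + S (t - x) • u' x) 0 s x := by
    intro x hx
    have hreflect {f : ℝ → ℂ} {f' : ℂ} (hf : HasDerivWithinAt f f' univ (t - x)) :
        HasDerivWithinAt (fun x => f (t - x)) (-f') s x :=
      ((hasDerivWithinAt_univ.1 hf).comp_const_sub t x).hasDerivWithinAt
    have hSx := hreflect (hS.hasDerivWithinAt (t - x) trivial)
    have hS'x := hreflect (hS.hasDerivWithinAt_deriv (t - x) trivial)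
    refine ((hS'x.smul (hu.hasDerivWithinAt x hx)).add
      (hSx.smul (hu.hasDerivWithinAt_deriv x hx))).congr_deriv ?_
    simp only [smul_eq_mul]
    module
  -- The right-hand side is independent of `a`, and at `a = t` it equals `u t`.
  have hconst := hs.norm_image_sub_le_of_norm_hasDerivWithin_le hderiv (C := 0) (by simp) ha ht
  simpa [hS₀, hS'₀, sub_eq_zero] using hconst

theorem IsDirichletEigenfunction.fundamental_eq_zero {μ : ℂ} {a b : ℝ} {u u' : ℝ → E}
    {S S' : ℝ → ℂ} (hu : IsDirichletEigenfunction (fun _ => μ) a b u u')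
    (hS : IsSturmLiouvilleSolutionOn (fun _ => μ) univ S S') (hS₀ : S 0 = 0) (hS'₀ : S' 0 = 1) :
    S (b - a) = 0 := by
  have hab := hu.left_lt_right.le
  have hshoot : ∀ t ∈ Icc a b, u t = S (t - a) • u' a := fun t ht => by
    simpa [hu.left_eq_zero] using hu.toIsSturmLiouvilleSolutionOn.eq_smul_add_smul
      (convex_Icc a b) hS hS₀ hS'₀ (left_mem_Icc.2 hab) ht
  obtain ⟨t, ht, hut⟩ := hu.exists_ne_zero
  have hu'a : u' a ≠ 0 := fun h => hut (by rw [hshoot t ht, h, smul_zero])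
  have hb : S (b - a) • u' a = 0 := by
    rw [← hshoot b (right_mem_Icc.2 hab), hu.right_eq_zero]
  exact (smul_eq_zero.1 hb).resolve_right hu'a

theorem exists_nat_sq_eq_of_sin_eq_zero {z : ℂ} (hz : z ≠ 0) (hsin : Complex.sin z = 0) :
    ∃ n : ℕ, 0 < n ∧ z ^ 2 = (n * π) ^ 2 := by
  obtain ⟨k, rfl⟩ := Complex.sin_eq_zero_iff.1 hsin
  have hk : k ≠ 0 := by
    rintro rfl
    simp at hz
  refine ⟨k.natAbs, Int.natAbs_pos.2 hk, ?_⟩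
  have hsq : ((k.natAbs : ℤ) : ℂ) ^ 2 = (k : ℂ) ^ 2 := mod_cast Int.natAbs_sq k
  rw [mul_pow, mul_pow, ← hsq, Int.cast_natCast]

theorem IsDirichletEigenfunction.exists_eq_sq {μ : ℂ} {a b : ℝ} {u u' : ℝ → E}
    (hu : IsDirichletEigenfunction (fun _ => μ) a b u u') :
    ∃ n : ℕ, 0 < n ∧ μ = (n * π / (b - a : ℝ)) ^ 2 := by
  have hL : ((b - a : ℝ) : ℂ) ≠ 0 := Complex.ofReal_ne_zero.2 (sub_ne_zero.2 hu.left_lt_right.ne')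
  obtain ⟨ω, rfl⟩ := IsAlgClosed.exists_pow_nat_eq μ two_pos
  have hω : ω ≠ 0 := by
    rintro rfl
    rw [zero_pow two_ne_zero] at hu
    exact hL (hu.fundamental_eq_zero isSturmLiouvilleSolutionOn_id Complex.ofReal_zero rfl)
  have hsin : Complex.sin (ω * (b - a : ℝ)) / ω = 0 :=
    hu.fundamental_eq_zero (isSturmLiouvilleSolutionOn_sin_div hω) (by simp) (by simp)
  obtain ⟨n, hn, hsq⟩ := exists_nat_sq_eq_of_sin_eq_zero (mul_ne_zero hω hL)
    ((div_eq_zero_iff.1 hsin).resolve_right hω)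
  refine ⟨n, hn, ?_⟩
  rw [div_pow, ← hsq, mul_pow, mul_div_cancel_right₀ _ (pow_ne_zero 2 hL)]

/-- The Liouville transform `u(t) = e^{-t/2} y(e^t - c)` of `y`, in the variable `t = log (c + x)`;
it removes the weight `(c + x)⁻²` from a Sturm–Liouville equation. -/
noncomputable def liouvilleTransform (c : ℝ) (y : ℝ → F) (t : ℝ) : F :=
  exp (-t / 2) • y (exp t - c)

theorem hasDerivWithinAt_liouvilleTransform {c t : ℝ} {s : Set ℝ} {y y' : ℝ → F}
    (hy : HasDerivWithinAt y (y' (exp t - c)) s (exp t - c)) :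
    HasDerivWithinAt (liouvilleTransform c y)
      (exp t • liouvilleTransform c y' t - (1 / 2 : ℝ) • liouvilleTransform c y t)
      ((exp · - c) ⁻¹' s) t := by
  have hweight : HasDerivAt (fun t : ℝ => exp (-t / 2)) (exp (-t / 2) * (-1 / 2)) t :=
    ((hasDerivAt_id t).neg.div_const 2).exp
  have hcomp := hy.scomp t ((hasDerivAt_exp t).sub_const c).hasDerivWithinAt (mapsTo_preimage _ _)
  refine (hweight.hasDerivWithinAt.smul hcomp).congr_deriv ?_
  simp only [liouvilleTransform, Function.comp_apply]
  module

theorem IsSturmLiouvilleSolutionOn.liouville {lam : ℂ} {c : ℝ} {s : Set ℝ} {y y' : ℝ → E}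
    (hy : IsSturmLiouvilleSolutionOn (fun x => lam / (c + x : ℝ) ^ 2) s y y') :
    IsSturmLiouvilleSolutionOn (fun _ => lam - 1 / 4) ((exp · - c) ⁻¹' s)
      (liouvilleTransform c y)
      (fun t => exp t • liouvilleTransform c y' t - (1 / 2 : ℝ) • liouvilleTransform c y t) where
  hasDerivWithinAt t ht := hasDerivWithinAt_liouvilleTransform (hy.hasDerivWithinAt _ ht)
  hasDerivWithinAt_deriv t ht := by
    have hu := hasDerivWithinAt_liouvilleTransform (hy.hasDerivWithinAt _ ht)
    have hu' := hasDerivWithinAt_liouvilleTransform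
      (y' := fun x => -((lam / (c + x : ℝ) ^ 2) • y x)) (hy.hasDerivWithinAt_deriv _ ht)
    refine (((hasDerivAt_exp t).hasDerivWithinAt.smul hu').sub
      (hu.const_smul (1 / 2 : ℝ))).congr_deriv ?_
    have hweight :
        exp t • exp t • liouvilleTransform c (fun x => -((lam / (c + x : ℝ) ^ 2) • y x)) t =
          -(lam • liouvilleTransform c y t) := by
      have hexp : (exp t : ℂ) ≠ 0 := Complex.ofReal_ne_zero.2 (exp_ne_zero t)
      have hlam : (exp t : ℂ) * exp t * (lam / (exp t : ℂ) ^ 2) = lam := by field_simp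
      simp only [liouvilleTransform, add_sub_cancel, ← Complex.coe_smul]
      linear_combination (norm := module) (-(exp (-t / 2) : ℂ)) • hlam • y (exp t - c)
    linear_combination (norm := module) hweight

theorem preimage_exp_sub_Icc {a b c : ℝ} (ha : 0 < c + a) (hb : 0 < c + b) :
    (exp · - c) ⁻¹' Icc a b = Icc (log (c + a)) (log (c + b)) := by
  ext t
  simp only [mem_preimage, mem_Icc, le_sub_iff_add_le', sub_le_iff_le_add',
    log_le_iff_le_exp ha, le_log_iff_exp_le hb]

theorem liouvilleTransform_log {c x : ℝ} (y : ℝ → F) (hx : 0 < c + x) :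
    liouvilleTransform c y (log (c + x)) = exp (-log (c + x) / 2) • y x := by
  rw [liouvilleTransform, exp_log hx, add_sub_cancel_left]

theorem IsDirichletEigenfunction.liouville {lam : ℂ} {a b c : ℝ} {y y' : ℝ → E}
    (ha : 0 < c + a) (hy : IsDirichletEigenfunction (fun x => lam / (c + x : ℝ) ^ 2) a b y y') :
    IsDirichletEigenfunction (fun _ => lam - 1 / 4) (log (c + a)) (log (c + b))
      (liouvilleTransform c y)
      (fun t => exp t • liouvilleTransform c y' t - (1 / 2 : ℝ) • liouvilleTransform c y t) := by
  have hb : 0 < c + b := by linarith [hy.left_lt_right]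
  constructor
  case toIsSturmLiouvilleSolutionOn =>
    rw [← preimage_exp_sub_Icc ha hb]
    exact hy.toIsSturmLiouvilleSolutionOn.liouville
  case left_eq_zero => rw [liouvilleTransform_log y ha, hy.left_eq_zero, smul_zero]
  case right_eq_zero => rw [liouvilleTransform_log y hb, hy.right_eq_zero, smul_zero]
  case exists_ne_zero =>
    obtain ⟨x, ⟨hax, hxb⟩, hyx⟩ := hy.exists_ne_zero
    have hx : 0 < c + x := by linarith
    refine ⟨log (c + x), ⟨log_le_log ha (by linarith), log_le_log hx (by linarith)⟩, ?_⟩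
    rw [liouvilleTransform_log y hx]
    exact smul_ne_zero (exp_ne_zero _) hyx

theorem sturm_liouville_eigenvalues_exact_general {lam : ℂ} {a b c : ℝ} {y y' : ℝ → E}
    (ha : 0 < c + a) (hy : IsDirichletEigenfunction (fun x => lam / (c + x : ℝ) ^ 2) a b y y') :
    ∃ n : ℕ, 0 < n ∧ lam = 1 / 4 + (n * π / log ((c + b) / (c + a))) ^ 2 := by
  have hb : 0 < c + b := by linarith [hy.left_lt_right]
  obtain ⟨n, hn, hlam⟩ := (hy.liouville ha).exists_eq_sq
  refine ⟨n, hn, ?_⟩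
  rw [log_div hb.ne' ha.ne', ← hlam, add_sub_cancel]

end

/-- If `λ` is real and `y : [0,1] → ℝ` is twice continuously differentiable, not
identically zero, satisfies `-y''(x) = λ * (1+x)^(-2) * y(x)` on `[0,1]` and
`y(0) = y(1) = 0`, then `λ = 1/4 + (n*π/log 2)^2` for some positive integer `n`. -/
theorem sturm_liouville_eigenvalues_exact
    (lam : ℝ) (y : ℝ → ℝ)
    (hreg : ContDiffOn ℝ 2 y (Set.Icc (0 : ℝ) 1))
    (hnz : ¬ (∀ x ∈ Set.Icc (0 : ℝ) 1, y x = 0))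
    (hode : ∀ x ∈ Set.Icc (0 : ℝ) 1,
      -(iteratedDerivWithin 2 y (Set.Icc (0 : ℝ) 1) x) = lam * (1 + x) ^ (-2 : ℤ) * y x)
    (hbc0 : y 0 = 0) (hbc1 : y 1 = 0) :
    ∃ n : ℕ, 0 < n ∧ lam = 1 / 4 + (n * π / Real.log 2) ^ 2 := by
  push Not at hnz
  have hy := isDirichletEigenfunction_ofReal zero_lt_one hreg hode hbc0 hbc1 hnz
  obtain ⟨n, hn, hlam⟩ := sturm_liouville_eigenvalues_exact_general (lam := lam) (a := 0) (b := 1)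
    (c := 1) (by norm_num) (by simpa [zpow_neg, div_eq_mul_inv] using hy)
  rw [add_zero, div_one, one_add_one_eq_two] at hlam
  exact ⟨n, hn, Complex.ofReal_injective (by push_cast; exact hlam)⟩
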